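/- Let x, y ∈ ℝ^n (with n ≥ 1) and w ∈ ℝ satisfy: x^{[j]} ≤ y^{[j]} for every j = 1,…,n; w ≤ x_i for every i; and w < y_i for every i. Let x' be obtained from x by replacing one entry achieving the maximum of x with the value w. Let y' be obtained from y by replacing one entry of y with some value v with v > w. Then there exists an index j ∈ {1,…,n} such that x'^{[j]} < y'^{[j]}; in particular x'^{[n]} < y'^{[n]}. -/

import Mathlib

/-- `nthLargest x j` is the `j`-th largest entry of `x : Fin n → ℝ` (0-indexed),
so `nthLargest x 0` is the maximum entry and `nthLargest x (n-1)` is the minimum: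
it is the `j`-th component of the rearrangement of `x` sorted in decreasing order. -/
noncomputable def nthLargest {n : ℕ} (x : Fin n → ℝ) (j : Fin n) : ℝ :=
  x (Tuple.sort x j.rev)

section nthLargest

variable {n : ℕ}

theorem nthLargest_antitone (x : Fin n → ℝ) : Antitone (nthLargest x) :=
  (Tuple.monotone_sort x).comp_antitone Fin.rev_anti

theorem nthLargest_rev_sort_symm (x : Fin n → ℝ) (i : Fin n) :
    nthLargest x ((Tuple.sort x).symm i).rev = x i := by
  rw [nthLargest, Fin.rev_rev, Equiv.apply_symm_apply]

theorem nthLargest_last_le (x : Fin (n + 1) → ℝ) (i : Fin (n + 1)) :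
    nthLargest x (Fin.last n) ≤ x i := by
  rw [← nthLargest_rev_sort_symm x i]
  exact nthLargest_antitone x (Fin.le_last _)

theorem lt_nthLargest_last_iff {x : Fin (n + 1) → ℝ} {a : ℝ} :
    a < nthLargest x (Fin.last n) ↔ ∀ i, a < x i :=
  ⟨fun h i ↦ h.trans_le (nthLargest_last_le x i), fun h ↦ h _⟩

theorem nthLargest_last_update_le (x : Fin (n + 1) → ℝ) (i : Fin (n + 1)) (a : ℝ) :
    nthLargest (Function.update x i a) (Fin.last n) ≤ a := by
  simpa only [Function.update_self] using nthLargest_last_le (Function.update x i a) i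

theorem lt_nthLargest_last_update_iff {x : Fin (n + 1) → ℝ} {i : Fin (n + 1)} {a b : ℝ} :
    a < nthLargest (Function.update x i b) (Fin.last n) ↔ a < b ∧ ∀ k ≠ i, a < x k :=
  lt_nthLargest_last_iff.trans (Function.forall_update_iff x fun _ c ↦ a < c)

end nthLargest

theorem stmt_5_general {n : ℕ} (x y : Fin (n + 1) → ℝ) {w v : ℝ} (i₀ i₁ : Fin (n + 1))
    (hy : ∀ i ≠ i₁, w < y i) (hv : w < v) :
    nthLargest (Function.update x i₀ w) (Fin.last n) <
      nthLargest (Function.update y i₁ v) (Fin.last n) :=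
  (nthLargest_last_update_le x i₀ w).trans_lt (lt_nthLargest_last_update_iff.2 ⟨hv, hy⟩)

/-- Necessity, Case 3: if every entry of `y` is strictly above `w` and the alternative
policy replaces one entry by some `v > w` while the proposed policy replaces a maximal
entry of `x` by `w`, then some order statistic (in particular the minimum) becomes
strictly smaller under the proposed policy. -/
theorem stmt_5 {n : ℕ} (x y : Fin (n + 1) → ℝ) (w : ℝ)
    (hdom : ∀ j : Fin (n + 1), nthLargest x j ≤ nthLargest y j)
    (hwx : ∀ i, w ≤ x i) (hwy : ∀ i, w < y i)
    (i₀ : Fin (n + 1)) (hmax : ∀ i, x i ≤ x i₀)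
    (x' : Fin (n + 1) → ℝ) (hx' : x' = Function.update x i₀ w)
    (i₁ : Fin (n + 1)) (v : ℝ) (hv : w < v)
    (y' : Fin (n + 1) → ℝ) (hy' : y' = Function.update y i₁ v) :
    (∃ j : Fin (n + 1), nthLargest x' j < nthLargest y' j) ∧
      nthLargest x' (Fin.last n) < nthLargest y' (Fin.last n) := by
  subst hx' hy'
  have hlast := stmt_5_general x y i₀ i₁ (fun i _ ↦ hwy i) hv
  exact ⟨⟨Fin.last n, hlast⟩, hlast⟩
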